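/- With G, F, ι, Θ as in the context, let f = Σ_{i≥0} g_i t^i ∈ Θ. If f is rational over F, i.e. there exist polynomials q, p ∈ F[t] with q ≠ 0 and q·f = p, then there exist an integer n ≥ 1, an index i₀ ∈ ℕ, and a sequence (h_i)_{i∈ℕ} of elements of G with h_{i+n} = h_i for all i, such that g_{i+n} = ι(h_i)·g_i in F for all i > i₀. -/

import Mathlib

/-!
Over an algebraically closed field of characteristic zero, the coefficients of a rational power
series are, after finitely many terms, an exponential polynomial `n ↦ ∑ pₐ(n) aⁿ`. Inversion
`γ ↦ γ⁻¹` of `G` extends to an automorphism of `F`, so the pointwise inverse `g⁻¹` (with `0⁻¹ = 0`)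
is rational as well. For a suitable `N`, the bases occurring in `g` and `g⁻¹` along the
progressions of difference `N` lie in a torsion-free group `M`, which has unique products.
Exponential polynomials with bases in `M` therefore form a domain, the group ring `K[X][M]`, whose
only units are the monomials with constant coefficient. There `g * g⁻¹` is idempotent, hence `0` or
`1`, so that `g` vanishes or is geometric on each progression.
-/

open Polynomial

section Algebra

variable {R M : Type*}

theorem ker_aeval_le_iSup_maxGenEigenspace {K V : Type*} [Field K] [AddCommGroup V] [Module K V]
    (f : Module.End K V) {p : K[X]} (hp : p.Splits) (hp₀ : p ≠ 0) :
    LinearMap.ker (aeval f p) ≤ ⨆ (a) (_ : p.IsRoot a), f.maxGenEigenspace a := by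
  classical
  have ker_prod_le (s : Finset K) :
      LinearMap.ker (aeval f (∏ a ∈ s, (X - C a) ^ p.roots.count a)) ≤
        ⨆ a ∈ s, f.maxGenEigenspace a := by
    induction s using Finset.induction_on with
    | empty => simp [Module.End.one_eq_id]
    | insert a s ha ih =>
      have coprime : IsCoprime ((X - C a) ^ p.roots.count a)
          (∏ b ∈ s, (X - C b) ^ p.roots.count b) :=
        IsCoprime.prod_right fun b hb => (isCoprime_X_sub_C_of_isUnit_sub
          (sub_ne_zero.2 (ne_of_mem_of_not_mem hb ha).symm).isUnit).pow
      rw [Finset.prod_insert ha, ← sup_ker_aeval_eq_ker_aeval_mul_of_coprime f coprime,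
        Finset.iSup_insert]
      refine sup_le_sup (fun v hv => ?_) ih
      exact (f.mem_maxGenEigenspace a v).2 ⟨_, by simpa [Algebra.algebraMap_eq_smul_one] using hv⟩
  intro v hv
  rw [hp.eq_prod_roots, LinearMap.mem_ker, map_mul, aeval_C, Module.End.mul_apply,
    Module.algebraMap_end_apply, smul_eq_zero_iff_right (leadingCoeff_ne_zero.2 hp₀),
    Finset.prod_multiset_map_count] at hv
  simpa [hp₀] using ker_prod_le p.roots.toFinset hv

theorem card_support_mul_card_support_le_one [Semiring R] [NoZeroDivisors R]
    [MulOneClass M] [TwoUniqueProds M] {x y : MonoidAlgebra R M} (h : x * y = 1) :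
    x.coeff.support.card * y.coeff.support.card ≤ 1 := by
  classical
  have mul_eq_one_of_uniqueMul {a b : M} (ha : a ∈ x.coeff.support) (hb : b ∈ y.coeff.support)
      (hab : UniqueMul x.coeff.support y.coeff.support a b) : a * b = 1 := by
    by_contra hne
    have hcoeff := MonoidAlgebra.coeff_mul_mul_of_uniqueMul hab
    rw [h, MonoidAlgebra.one_def, MonoidAlgebra.coeff_single,
      Finsupp.single_eq_of_ne hne] at hcoeff
    exact mul_ne_zero (Finsupp.mem_support_iff.1 ha) (Finsupp.mem_support_iff.1 hb) hcoeff.symm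
  by_contra! hcard
  obtain ⟨⟨a, b⟩, hab, ⟨a', b'⟩, hab', hne, huniq, huniq'⟩ :=
    TwoUniqueProds.uniqueMul_of_one_lt_card hcard
  rw [Finset.mem_product] at hab hab'
  refine hne (Prod.ext_iff.2 (huniq' hab.1 hab.2 ?_))
  rw [mul_eq_one_of_uniqueMul hab.1 hab.2 huniq, mul_eq_one_of_uniqueMul hab'.1 hab'.2 huniq']

theorem exists_eq_single_of_mul_eq_one [CommSemiring R] [NoZeroDivisors R] [Nontrivial R]
    [Monoid M] [TwoUniqueProds M] {x y : MonoidAlgebra R M} (h : x * y = 1) :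
    ∃ a r, IsUnit r ∧ x = MonoidAlgebra.single a r := by
  have hx : x.coeff.support.card ≠ 0 := by
    simpa using left_ne_zero_of_mul_eq_one h
  have hy : y.coeff.support.card ≠ 0 := by
    simpa using right_ne_zero_of_mul_eq_one h
  have hcard : x.coeff.support.card = 1 :=
    (mul_eq_one.1 ((card_support_mul_card_support_le_one h).antisymm
      (Nat.one_le_iff_ne_zero.2 (mul_ne_zero hx hy)))).1
  obtain ⟨a, r, -, hr⟩ := Finsupp.card_support_eq_one'.1 hcard
  obtain rfl : x = MonoidAlgebra.single a r := MonoidAlgebra.ext (by rw [hr]; rfl)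
  let augmentation := MonoidAlgebra.lift R R M (1 : M →* R)
  have r_mul_augmentation : r * augmentation y = 1 := by
    simpa [augmentation, MonoidAlgebra.lift_single] using congrArg augmentation h
  exact ⟨a, r, .of_mul_eq_one _ r_mul_augmentation, rfl⟩

theorem exists_twoUniqueProds_pow_mem_of_fg (A : Type*) [CommGroup A] [Group.FG A] :
    ∃ N ≠ 0, ∃ M : Subgroup A, TwoUniqueProds M ∧ ∀ a, a ^ N ∈ M := by
  obtain ⟨ι, j, _, _, p, hp, k, ⟨φ⟩⟩ := CommGroup.equiv_free_prod_prod_multiplicative_zmod A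
  have (i : ι) : NeZero (p i ^ k i) := ⟨pow_ne_zero _ (hp i).ne_zero⟩
  let freePart := (MonoidHom.fst _ _).comp φ.toMonoidHom
  let torsionPart := (MonoidHom.snd _ _).comp φ.toMonoidHom
  refine ⟨Nat.card ((i : ι) → Multiplicative (ZMod (p i ^ k i))), Nat.card_pos.ne',
    torsionPart.ker, ?_, fun a => by rw [MonoidHom.mem_ker, map_pow, pow_card_eq_one']⟩
  refine .of_injective_mulHom (freePart.comp torsionPart.ker.subtype).toMulHom
    (fun a b hab => ?_) inferInstance
  exact Subtype.ext (φ.injective (Prod.ext hab (a.2.trans b.2.symm)))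

theorem exists_twoUniqueProds_pow_mem {A : Type*} [CommGroup A] {s : Set A} (hs : s.Finite) :
    ∃ N ≠ 0, ∃ M : Subgroup A, TwoUniqueProds M ∧ ∀ a ∈ s, a ^ N ∈ M := by
  have := hs.to_subtype
  have := Group.closure_finite_fg s
  obtain ⟨N, hN, M, hM, hpow⟩ := exists_twoUniqueProds_pow_mem_of_fg (Subgroup.closure s)
  let e := M.equivMapOfInjective _ (Subgroup.closure s).subtype_injective
  exact ⟨N, hN, M.map (Subgroup.closure s).subtype,
    .of_injective_mulHom e.symm.toMulHom e.symm.injective hM,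
    fun a ha => ⟨_, hpow ⟨a, Subgroup.subset_closure ha⟩, rfl⟩⟩

theorem exists_periodic_add_eq {α : Type*} {c : ℕ → α} {N : ℕ} (hc : Function.Periodic c N)
    (hN : N ≠ 0) (k : ℕ) : ∃ c' : ℕ → α, Function.Periodic c' N ∧ ∀ n, c' (n + k) = c n := by
  obtain ⟨m, rfl⟩ := Nat.exists_eq_succ_of_ne_zero hN
  refine ⟨fun n => c (n + m * k), fun n => ?_, fun n => ?_⟩
  · simp only [add_right_comm n, hc (n + m * k)]
  · calc c (n + k + m * k) = c (n + k * m.succ) := by congr 1; grind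
      _ = c n := hc.nat_mul k n

theorem eq_zero_of_eval_natCast_eq_zero [CommRing R] [IsDomain R] [CharZero R] {p : R[X]}
    (hp : ∀ n : ℕ, p.eval (n : R) = 0) : p = 0 :=
  p.eq_zero_of_infinite_isRoot <|
    (Set.infinite_range_of_injective Nat.cast_injective).mono (Set.range_subset_iff.2 hp)

theorem fwdDiff_iter_eval_natCast_eq_zero [CommRing R] {p : R[X]} {k : ℕ}
    (hp : p.natDegree < k) : (fwdDiff 1)^[k] (fun n : ℕ => p.eval (n : R)) = 0 := by
  ext n
  have h := congrFun (fwdDiff_iter_eq_zero_of_degree_lt hp) (n : R)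
  rw [fwdDiff_iter_eq_sum_shift] at h ⊢
  simpa using h

theorem exists_eval_eq_of_fwdDiff_iter_eq_zero {K : Type*} [Field K] [CharZero K]
    {w : ℕ → K} {k : ℕ} (hw : (fwdDiff 1)^[k] w = 0) :
    ∃ p : K[X], ∀ n : ℕ, w n = p.eval (n : K) := by
  have hw_le (j : ℕ) (hj : k ≤ j) : (fwdDiff 1)^[j] w = 0 := by
    obtain ⟨i, rfl⟩ := Nat.exists_eq_add_of_le' hj
    rw [Function.iterate_add_apply, hw, ← fwdDiff_aux.coe_fwdDiffₗ_pow, map_zero]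
  refine ⟨∑ j ∈ Finset.range k, C ((fwdDiff 1)^[j] w 0 / (j.factorial : K)) * descPochhammer K j,
    fun n => ?_⟩
  calc w n = ∑ j ∈ Finset.range (n + 1), n.choose j • (fwdDiff 1)^[j] w 0 := by
        simpa using shift_eq_sum_fwdDiff_iter 1 w n 0
    _ = ∑ j ∈ Finset.range k, n.choose j • (fwdDiff 1)^[j] w 0 := by
      refine Finset.sum_congr_of_eq_on_inter (fun j _ hj => ?_) (fun j _ hj => ?_)
        fun _ _ _ => rfl
      · simp [hw_le j (by simpa using hj)]
      · simp [Nat.choose_eq_zero_of_lt (show n < j by simpa using hj)]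
    _ = (∑ j ∈ Finset.range k,
          C ((fwdDiff 1)^[j] w 0 / (j.factorial : K)) * descPochhammer K j).eval (n : K) := by
      rw [eval_finsetSum]
      refine Finset.sum_congr rfl fun j _ => ?_
      rw [eval_mul, eval_C, nsmul_eq_mul, Nat.cast_choose_eq_descPochhammer_div K]
      ring

end Algebra

section Shift

/-- The shift operator `u ↦ (n ↦ u (n + 1))` on sequences. Linear recurrences with constant
coefficients are the equations `aeval (shift R) q u = 0`. -/
def shift (R : Type*) [Semiring R] : Module.End R (ℕ → R) :=
  LinearMap.funLeft R R Nat.succ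

theorem shift_pow_apply {R : Type*} [Semiring R] (u : ℕ → R) (k n : ℕ) :
    (shift R ^ k) u n = u (n + k) := by
  induction k generalizing u with
  | zero => rfl
  | succ k ih => rw [pow_succ, Module.End.mul_apply, ih]; rfl

theorem shift_sub_pow_mul_geom {R : Type*} [CommRing R] (c : R) (w : ℕ → R) (k : ℕ) :
    ((shift R - c • (1 : Module.End R (ℕ → R))) ^ k) (fun n => w n * c ^ n) =
      c ^ k • fun n => ((fwdDiff 1)^[k] w) n * c ^ n := by
  induction k generalizing w with
  | zero => simp
  | succ k ih =>
    have step : (shift R - c • (1 : Module.End R (ℕ → R))) (fun n => w n * c ^ n) =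
        c • fun n => fwdDiff 1 w n * c ^ n := by
      ext n
      simp only [shift, fwdDiff, LinearMap.sub_apply, LinearMap.funLeft_apply,
        LinearMap.smul_apply, Module.End.one_apply, Pi.sub_apply, Pi.smul_apply, smul_eq_mul,
        Nat.succ_eq_add_one]
      ring
    rw [pow_succ, Module.End.mul_apply, step, map_smul, ih, smul_smul, pow_succ',
      Function.iterate_succ_apply]

theorem aeval_shift_reverse_apply {R : Type*} [CommSemiring R] (q : R[X]) (u : ℕ → R) (n : ℕ) :
    aeval (shift R) q.reverse u n =
      PowerSeries.coeff (n + q.natDegree) ((q : PowerSeries R) * PowerSeries.mk u) := by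
  rw [aeval_eq_sum_range' (Nat.lt_succ_of_le q.reverse_natDegree_le),
    PowerSeries.coeff_mul, Finset.Nat.sum_antidiagonal_eq_sum_range_succ_mk,
    ← Finset.sum_range_reflect]
  simp only [LinearMap.sum_apply, Finset.sum_apply, LinearMap.smul_apply, Pi.smul_apply,
    shift_pow_apply, smul_eq_mul, Polynomial.coeff_coe, PowerSeries.coeff_mk]
  refine Finset.sum_subset_zero_on_sdiff (Finset.range_mono (by lia)) (fun i hi => ?_)
    fun i hi => ?_
  · simp only [Finset.mem_sdiff, Finset.mem_range] at hi
    rw [coeff_eq_zero_of_natDegree_lt (by lia), zero_mul]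
  · rw [Finset.mem_range] at hi
    rw [coeff_reverse, revAt_le (by lia)]
    congr 2 <;> lia

theorem mem_maxGenEigenspace_shift_iff {K : Type*} [Field K] [CharZero K] {c : K} (hc : c ≠ 0)
    {u : ℕ → K} :
    u ∈ (shift K).maxGenEigenspace c ↔ ∃ p : K[X], u = fun n : ℕ => p.eval (n : K) * c ^ n := by
  rw [Module.End.mem_maxGenEigenspace]
  constructor
  · rintro ⟨k, hk⟩
    obtain ⟨w, rfl⟩ : ∃ w : ℕ → K, u = fun n => w n * c ^ n :=
      ⟨fun n => u n / c ^ n, by ext n; field_simp⟩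
    rw [shift_sub_pow_mul_geom] at hk
    obtain ⟨p, hp⟩ := exists_eval_eq_of_fwdDiff_iter_eq_zero (w := w) (k := k) <| by
      ext n
      simpa [hc] using congrFun hk n
    exact ⟨p, by simp only [hp]⟩
  · rintro ⟨p, rfl⟩
    refine ⟨p.natDegree + 1, ?_⟩
    rw [shift_sub_pow_mul_geom, fwdDiff_iter_eval_natCast_eq_zero p.natDegree.lt_succ_self]
    ext n
    simp

end Shift

section ExpPoly

variable {K A : Type*}

/-- The sequence `n ↦ ∑ pₐ(n) χ(a)ⁿ` attached to a formal exponential polynomial `∑ pₐ · a`,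
encoded as an element of the monoid algebra of `A` over `K[X]`. Products of formal exponential
polynomials go to pointwise products of sequences. -/
noncomputable def expPolyEval [CommSemiring K] [Monoid A] (χ : A →* K) :
    MonoidAlgebra K[X] A →ₐ[K] (ℕ → K) :=
  MonoidAlgebra.liftNCAlgHom (Polynomial.aeval (fun n : ℕ => (n : K)))
    (MonoidHom.pi fun n => (powMonoidHom n).comp χ) fun _ _ => Commute.all _ _

theorem expPolyEval_single [CommSemiring K] [Monoid A] (χ : A →* K) (a : A) (p : K[X]) (n : ℕ) :
    expPolyEval χ (MonoidAlgebra.single a p) n = p.eval (n : K) * χ a ^ n := by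
  simp [expPolyEval]

theorem expPolyEval_apply [CommSemiring K] [Monoid A] (χ : A →* K) (P : MonoidAlgebra K[X] A) :
    expPolyEval χ P = ∑ a ∈ P.coeff.support, fun n : ℕ => (P.coeff a).eval (n : K) * χ a ^ n := by
  conv_lhs => rw [← P.sum_coeff_single, Finsupp.sum, map_sum]
  exact Finset.sum_congr rfl fun a _ => funext (expPolyEval_single χ a _)

theorem expPolyEval_injective [Field K] [CharZero K] [CommGroup A] {χ : A →* K}
    (hχ : Function.Injective χ) : Function.Injective (expPolyEval χ) := by
  rw [injective_iff_map_eq_zero]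
  intro P hP
  have hne (a : A) : χ a ≠ 0 := ((Group.isUnit a).map χ).ne_zero
  have independent : iSupIndep fun a => (shift K).maxGenEigenspace (χ a) :=
    (shift K).independent_maxGenEigenspace.comp hχ
  rw [iSupIndep_iff_finsetSum_eq_zero_imp_eq_zero] at independent
  rw [expPolyEval_apply] at hP
  have terms_eq_zero := independent _ _
    (fun a _ => (mem_maxGenEigenspace_shift_iff (hne a)).2 ⟨P.coeff a, rfl⟩) hP
  ext1; ext1 a
  by_contra ha
  refine ha (eq_zero_of_eval_natCast_eq_zero fun n => ?_)
  simpa [hne a] using congrFun (terms_eq_zero a (Finsupp.mem_support_iff.2 ha)) n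

theorem expPolyEval_progression_mem_range [CommSemiring K] {P : MonoidAlgebra K[X] Kˣ} {N : ℕ}
    {M : Subgroup Kˣ} (hM : ∀ a ∈ P.coeff.support, a ^ N ∈ M) (b : ℕ) :
    (fun n => expPolyEval (Units.coeHom K) P (b + N * n)) ∈
      (expPolyEval ((Units.coeHom K).comp M.subtype)).range := by
  have sum_eq : (fun n => expPolyEval (Units.coeHom K) P (b + N * n)) =
      ∑ a ∈ P.coeff.support, fun n : ℕ =>
        (P.coeff a).eval ((b + N * n : ℕ) : K) * (a : K) ^ (b + N * n) := by
    ext n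
    simp only [expPolyEval_apply, Finset.sum_apply, Units.coeHom_apply]
  rw [sum_eq]
  refine sum_mem fun a ha => ⟨MonoidAlgebra.single ⟨a ^ N, hM a ha⟩
    (C ((a : K) ^ b) * (P.coeff a).comp (C (b : K) + C (N : K) * X)), funext fun n => ?_⟩
  simp only [AlgHom.toRingHom_eq_coe, RingHom.coe_coe, expPolyEval_single, eval_mul, eval_C,
    eval_comp, eval_add, eval_X, MonoidHom.comp_apply, Subgroup.subtype_apply,
    Units.coeHom_apply, Units.val_pow_eq_pow_val, Nat.cast_add, Nat.cast_mul, pow_add, pow_mul]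
  ring

theorem maxGenEigenspace_shift_le_range [Field K] [CharZero K] {c : K} (hc : c ≠ 0) :
    (shift K).maxGenEigenspace c ≤
      Subalgebra.toSubmodule (expPolyEval (Units.coeHom K)).range := by
  intro u hu
  obtain ⟨p, rfl⟩ := (mem_maxGenEigenspace_shift_iff hc).1 hu
  exact ⟨MonoidAlgebra.single (Units.mk0 c hc) p, funext (expPolyEval_single _ _ _)⟩

theorem exists_geom_of_mem_range_expPolyEval [Field K] [CharZero K] [CommGroup A]
    [TwoUniqueProds A] {χ : A →* K} (hχ : Function.Injective χ) {u : ℕ → K}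
    (hu : u ∈ (expPolyEval χ).range) (hu' : u⁻¹ ∈ (expPolyEval χ).range) :
    ∃ c : Kˣ, ∀ n, u (n + 1) = c * u n := by
  obtain ⟨P, hP : expPolyEval χ P = u⟩ := hu
  obtain ⟨Q, hQ : expPolyEval χ Q = u⁻¹⟩ := hu'
  have idempotent : IsIdempotentElem (P * Q) := expPolyEval_injective hχ <| by
    ext n
    simp [hP, hQ, ← mul_assoc]
  rcases IsIdempotentElem.iff_eq_zero_or_one.1 idempotent with h | h
  · have u_eq_zero (n : ℕ) : u n = 0 := by
      simpa [hP, hQ] using congrFun (congrArg (expPolyEval χ) h) n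
    exact ⟨1, fun n => by simp [u_eq_zero]⟩
  · obtain ⟨a, r, hr, rfl⟩ := exists_eq_single_of_mul_eq_one h
    obtain ⟨k, -, rfl⟩ := Polynomial.isUnit_iff.1 hr
    refine ⟨(Group.isUnit a).unit.map χ, fun n => ?_⟩
    simp only [← hP, expPolyEval_single, eval_C, pow_succ, Units.coe_map, IsUnit.unit_spec]
    ring

theorem exists_periodic_ratio_of_mem_range_expPolyEval [Field K] [CharZero K] {u : ℕ → K}
    (hu : u ∈ (expPolyEval (Units.coeHom K)).range)
    (hu' : u⁻¹ ∈ (expPolyEval (Units.coeHom K)).range) :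
    ∃ N ≠ 0, ∃ c : ℕ → Kˣ, Function.Periodic c N ∧ ∀ n, u (n + N) = c n * u n := by
  obtain ⟨P, hP : expPolyEval _ P = u⟩ := hu
  obtain ⟨Q, hQ : expPolyEval _ Q = u⁻¹⟩ := hu'
  obtain ⟨N, hN, M, _, hM⟩ := exists_twoUniqueProds_pow_mem
    (P.coeff.support.finite_toSet.union Q.coeff.support.finite_toSet)
  have inclusion_injective : Function.Injective ((Units.coeHom K).comp M.subtype) :=
    Units.val_injective.comp M.subtype_injective
  have geometric_on_progression (b : ℕ) :
      ∃ c : Kˣ, ∀ n, u (b + N * (n + 1)) = c * u (b + N * n) := by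
    have hPb := expPolyEval_progression_mem_range (fun a ha => hM a (.inl ha)) b
    have hQb := expPolyEval_progression_mem_range (fun a ha => hM a (.inr ha)) b
    rw [hP] at hPb
    rw [hQ] at hQb
    exact exists_geom_of_mem_range_expPolyEval inclusion_injective hPb hQb
  choose c hc using geometric_on_progression
  refine ⟨N, hN, fun n => c (n % N), fun n => by simp only [Nat.add_mod_right], fun n => ?_⟩
  have h := hc (n % N) (n / N)
  rwa [mul_add_one, ← add_assoc, Nat.mod_add_div] at h

end ExpPoly

section IsRationalSeq

variable {F : Type*} [Field F]

/-- The power series `∑ uₙ tⁿ` is a rational function over the field `F`. -/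
def IsRationalSeq (u : ℕ → F) : Prop :=
  ∃ q p : F[X], q ≠ 0 ∧ (q : PowerSeries F) * PowerSeries.mk u = p

theorem IsRationalSeq.map {K : Type*} [Field K] (φ : F →+* K) {u : ℕ → F}
    (hu : IsRationalSeq u) : IsRationalSeq (φ ∘ u) := by
  obtain ⟨q, p, hq, hqp⟩ := hu
  refine ⟨q.map φ, p.map φ, (Polynomial.map_ne_zero_iff φ.injective).2 hq, ?_⟩
  have map_mk : PowerSeries.map φ (PowerSeries.mk u) = PowerSeries.mk (φ ∘ u) := by
    ext n
    simp
  rw [polynomial_map_coe, polynomial_map_coe, ← hqp, map_mul, map_mk]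

theorem IsRationalSeq.eventually_mem_range_expPolyEval [CharZero F] [IsAlgClosed F] {u : ℕ → F}
    (hu : IsRationalSeq u) :
    ∀ᶠ k in Filter.atTop, (fun n => u (n + k)) ∈ (expPolyEval (Units.coeHom F)).range := by
  obtain ⟨q, p, hq, hqp⟩ := hu
  filter_upwards [Filter.eventually_gt_atTop p.natDegree] with k hk
  have commute : Commute (aeval (shift F) q.reverse) (shift F ^ k) := by
    simpa using (Commute.all q.reverse (X ^ k)).map (aeval (shift F))
  have annihilated : (fun n => u (n + k)) ∈ LinearMap.ker (aeval (shift F) q.reverse) := by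
    ext n
    rw [← funext (shift_pow_apply u k), ← Module.End.mul_apply, commute.eq,
      Module.End.mul_apply, shift_pow_apply, aeval_shift_reverse_apply, hqp, Polynomial.coeff_coe,
      coeff_eq_zero_of_natDegree_lt (by lia), Pi.zero_apply]
  have root_ne_zero {c : F} (hc : q.reverse.IsRoot c) : c ≠ 0 := by
    rintro rfl
    rw [IsRoot, ← coeff_zero_eq_eval_zero, coeff_zero_reverse] at hc
    exact hq (leadingCoeff_eq_zero.1 hc)
  exact (ker_aeval_le_iSup_maxGenEigenspace (shift F) (IsAlgClosed.splits _)
    (reverse_eq_zero.not.2 hq)).trans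
    (iSup₂_le fun c hc => maxGenEigenspace_shift_le_range (root_ne_zero hc)) annihilated

theorem IsRationalSeq.exists_periodic_ratio [CharZero F] [IsAlgClosed F] {u : ℕ → F}
    (hu : IsRationalSeq u) (hu' : IsRationalSeq u⁻¹) :
    ∃ N ≠ 0, ∃ i₀, ∃ c : ℕ → Fˣ,
      Function.Periodic c N ∧ ∀ n ≥ i₀, u (n + N) = c n * u n := by
  obtain ⟨k, hk, hk'⟩ := (hu.eventually_mem_range_expPolyEval.and
    hu'.eventually_mem_range_expPolyEval).exists
  obtain ⟨N, hN, c, hc, hratio⟩ := exists_periodic_ratio_of_mem_range_expPolyEval hk hk'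
  obtain ⟨c', hc', hshift⟩ := exists_periodic_add_eq hc hN k
  refine ⟨N, hN, k, c', hc', fun n hn => ?_⟩
  obtain ⟨n, rfl⟩ := Nat.exists_eq_add_of_le' hn
  rw [add_right_comm, hratio, hshift]

theorem IsRationalSeq.exists_periodic_ratio_mem {Γ : Type*} [CharZero F] [Group Γ]
    (ι : Γ →* F) {u : ℕ → F} (hι : ∀ n, u n = 0 ∨ ∃ γ, u n = ι γ) (hu : IsRationalSeq u)
    (hu' : IsRationalSeq u⁻¹) :
    ∃ N ≠ 0, ∃ i₀, ∃ h : ℕ → Γ,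
      Function.Periodic h N ∧ ∀ n ≥ i₀, u (n + N) = ι (h n) * u n := by
  let φ : F →+* AlgebraicClosure F := algebraMap F (AlgebraicClosure F)
  have : CharZero (AlgebraicClosure F) := charZero_of_injective_ringHom φ.injective
  have inv_rational : IsRationalSeq (φ ∘ u)⁻¹ := by
    simpa only [Function.comp_def, Pi.inv_def, map_inv₀] using hu'.map φ
  obtain ⟨N, hN, i₀, c, hc, hratio⟩ := (hu.map φ).exists_periodic_ratio inv_rational
  let h (n : ℕ) : Γ := Function.invFun (fun γ => φ (ι γ)) (c n)
  refine ⟨N, hN, i₀, h, fun n => by simp only [h, hc n], fun n hn => φ.injective ?_⟩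
  have hn_ratio : φ (u (n + N)) = c n * φ (u n) := hratio n hn
  obtain hzero | ⟨γ, hγ⟩ := hι n
  · rw [hn_ratio, hzero, mul_zero, map_zero, mul_zero]
  have hγ_ne : φ (ι γ) ≠ 0 := (((Group.isUnit γ).map ι).map φ).ne_zero
  obtain ⟨γ', hγ'⟩ : ∃ γ', u (n + N) = ι γ' := (hι (n + N)).resolve_left fun hzero => by
    rw [hzero, hγ, map_zero] at hn_ratio
    exact mul_ne_zero (c n).ne_zero hγ_ne hn_ratio.symm
  have ratio_mem : ∃ δ, φ (ι δ) = c n := ⟨γ' * γ⁻¹, mul_right_cancel₀ hγ_ne <| by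
    rw [← map_mul, ← map_mul, inv_mul_cancel_right, ← hγ', ← hγ, hn_ratio]⟩
  rw [hn_ratio, map_mul]
  congr 1
  exact (Function.invFun_eq ratio_mem).symm

end IsRationalSeq

section GroupRing

variable {R G F : Type*} [CommRing R] [CommGroup G] [Field F] [Algebra (MonoidAlgebra R G) F]
  [IsFractionRing (MonoidAlgebra R G) F]

variable (R G F) in
theorem exists_ringEquiv_algebraMap_of_eq_inv :
    ∃ τ : F ≃+* F, ∀ γ : G, τ (algebraMap (MonoidAlgebra R G) F (MonoidAlgebra.of R G γ)) =
      (algebraMap (MonoidAlgebra R G) F (MonoidAlgebra.of R G γ))⁻¹ := by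
  refine ⟨IsFractionRing.ringEquivOfRingEquiv
    (MonoidAlgebra.mapDomainRingEquiv R (MulEquiv.inv G)), fun γ => eq_inv_of_mul_eq_one_left ?_⟩
  rw [IsFractionRing.ringEquivOfRingEquiv_algebraMap, ← map_mul]
  simp [MonoidAlgebra.one_def]

theorem eventually_periodic_ratios_of_rational_general [CharZero R] (g : ℕ → F)
    (hΘ : ∀ i, g i = 0 ∨ ∃ γ : G, g i =
      algebraMap (MonoidAlgebra R G) F (MonoidAlgebra.of R G γ))
    (hrat : IsRationalSeq g) :
    ∃ n : ℕ, 1 ≤ n ∧ ∃ i₀ : ℕ, ∃ h : ℕ → G,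
      (∀ i, h (i + n) = h i) ∧
      ∀ i > i₀, g (i + n) =
        algebraMap (MonoidAlgebra R G) F (MonoidAlgebra.of R G (h i)) * g i := by
  have : CharZero (MonoidAlgebra R G) := charZero_of_injective_ringHom
    (f := MonoidAlgebra.singleOneRingHom) MonoidAlgebra.single_right_injective
  have : CharZero F := IsFractionRing.charZero_of_isFractionRing (MonoidAlgebra R G)
  obtain ⟨τ, hτ⟩ := exists_ringEquiv_algebraMap_of_eq_inv R G F
  have inv_eq : τ ∘ g = g⁻¹ := by
    ext i
    obtain hi | ⟨γ, hi⟩ := hΘ i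
    · simp only [Function.comp_apply, Pi.inv_apply, hi, map_zero, inv_zero]
    · simp only [Function.comp_apply, Pi.inv_apply, hi, hτ]
  obtain ⟨n, hn, i₀, h, hperiodic, hratio⟩ := hrat.exists_periodic_ratio_mem
    ((algebraMap (MonoidAlgebra R G) F : MonoidAlgebra R G →* F).comp (MonoidAlgebra.of R G)) hΘ
    (inv_eq ▸ hrat.map (τ : F →+* F))
  exact ⟨n, Nat.one_le_iff_ne_zero.2 hn, i₀, h, hperiodic, fun i hi => hratio i hi.le⟩

end GroupRing

/-- Let `G` be a free abelian group (written multiplicatively), `ℤ[G]` its group ring (an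
integral domain), and `F` its field of fractions.  If a power series `Σ gᵢ tⁱ ∈ F[[t]]`, all of
whose coefficients are `0` or elements of `G`, is rational over `F`, then there are an integer
`n ≥ 1`, an index `i₀` and a sequence `hᵢ ∈ G`, periodic with period `n`, such that
`g_{i+n} = hᵢ · gᵢ` for all `i > i₀`. -/
theorem eventually_periodic_ratios_of_rational
    {G : Type*} [CommGroup G] [Module.Free ℤ (Additive G)]
    [IsDomain (MonoidAlgebra ℤ G)]
    (g : ℕ → FractionRing (MonoidAlgebra ℤ G))
    (hΘ : ∀ i, g i = 0 ∨ ∃ γ : G, g i =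
      algebraMap (MonoidAlgebra ℤ G) (FractionRing (MonoidAlgebra ℤ G))
        (MonoidAlgebra.of ℤ G γ))
    (hrat : ∃ q p : Polynomial (FractionRing (MonoidAlgebra ℤ G)), q ≠ 0 ∧
      (q : PowerSeries (FractionRing (MonoidAlgebra ℤ G))) * PowerSeries.mk g =
        (p : PowerSeries (FractionRing (MonoidAlgebra ℤ G)))) :
    ∃ n : ℕ, 1 ≤ n ∧ ∃ i₀ : ℕ, ∃ h : ℕ → G,
      (∀ i, h (i + n) = h i) ∧
      ∀ i > i₀, g (i + n) =
        algebraMap (MonoidAlgebra ℤ G) (FractionRing (MonoidAlgebra ℤ G))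
          (MonoidAlgebra.of ℤ G (h i)) * g i :=
  eventually_periodic_ratios_of_rational_general g hΘ hrat
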